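/- For n = 4, the size signature of every 4-crossing is either (4, 4, 4) or (4, 8, 4): for every bijection l : ℤ/4 → {1,2,3,4}, either m_1(l) = m_2(l) = m_3(l) = 4, or m_1(l) = m_3(l) = 4 and m_2(l) = 8. Moreover, both signatures occur: the cyclic level sequence 1,2,3,4 has signature (4,4,4), and the cyclic level sequence 1,3,2,4 has signature (4,8,4). -/

import Mathlib

/-- The cyclic successor `j + 1` in `ℤ/n` (modeled as `Fin n`). -/
def cyc {n : ℕ} (j : Fin n) : Fin n :=
  ⟨(j.val + 1) % n, Nat.mod_lt _ (Nat.zero_lt_of_lt j.isLt)⟩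

/-- The cyclic predecessor `j - 1` in `ℤ/n` (modeled as `Fin n`). -/
def cycPred {n : ℕ} (j : Fin n) : Fin n :=
  ⟨(j.val + (n - 1)) % n, Nat.mod_lt _ (Nat.zero_lt_of_lt j.isLt)⟩

/-- The size `m i` of the `i`-th crossing-centered bipyramid of the `n`-crossing with
level function `l : ℤ/n → {1, …, n}`:
`m_i(l) = 2·|{ j : min(l j, l (j+1)) ≤ i  and  i+1 ≤ max(l j, l (j+1)) }|`. -/
def bipSize (n : ℕ) (l : Fin n → ℕ) (i : ℕ) : ℕ :=
  2 * (Finset.univ.filter fun j : Fin n =>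
      min (l j) (l (cyc j)) ≤ i ∧ i + 1 ≤ max (l j) (l (cyc j))).card

/-!
Call the strands at levels at most `i` low. The definition of `m_i` counts the cyclically
consecutive pairs of strands of which exactly one is low, that is, the places where the cyclic
order leaves the low strands and the places where it enters them. There are equally many of
both, say `k`, so `m_i = 4 * k`. Distinct exits start at distinct low strands and distinct entries
at distinct high strands, and the rotation is a single cycle, so `1 ≤ k ≤ min i (n - i)`. For
`n = 4` this leaves only `k = 1` at `i = 1, 3`, and `k = 1` or `k = 2` at `i = 2`.
-/

section Exits

open Equiv Finset

variable {α : Type*} [DecidableEq α]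

/-- The points of `S` that the permutation `σ` moves out of `S`. The points at which `σ` enters `S`
are encoded as `exits σ Sᶜ`. -/
def exits (σ : Perm α) (S : Finset α) : Finset α :=
  {x ∈ S | σ x ∉ S}

@[simp]
theorem mem_exits {σ : Perm α} {S : Finset α} {x : α} : x ∈ exits σ S ↔ x ∈ S ∧ σ x ∉ S :=
  mem_filter

theorem exits_subset (σ : Perm α) (S : Finset α) : exits σ S ⊆ S :=
  filter_subset _ _

theorem card_exits_compl [Fintype α] (σ : Perm α) (S : Finset α) :
    #(exits σ Sᶜ) = #(exits σ S) := by
  let T := S.map σ.symm.toEmbedding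
  have hT (x : α) : x ∈ T ↔ σ x ∈ S := by simp [T, mem_map_equiv]
  have h_exits : exits σ S = S \ T := by ext x; simp [hT]
  have h_entries : exits σ Sᶜ = T \ S := by ext x; simp [hT, and_comm]
  rw [h_exits, h_entries]
  exact card_sdiff_comm (card_map _)

theorem exits_nonempty_of_sameCycle [Finite α] {σ : Perm α} {S : Finset α} {x y : α}
    (hxy : σ.SameCycle x y) (hx : x ∈ S) (hy : y ∉ S) : (exits σ S).Nonempty := by
  by_contra h_empty
  have h_maps : Set.MapsTo σ S S := fun z hz ↦ by
    by_contra hσz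
    exact h_empty ⟨z, mem_exits.mpr ⟨hz, hσz⟩⟩
  obtain ⟨k, rfl⟩ := hxy.exists_nat_pow_eq
  exact hy (h_maps.perm_pow k hx)

end Exits

section Rotation

theorem cyc_eq_finRotate {n : ℕ} (j : Fin n) : cyc j = finRotate n j := by
  have := j.neZero
  ext
  simp [cyc, finRotate_apply, Fin.val_add]

theorem sameCycle_finRotate {n : ℕ} (j k : Fin n) : (finRotate n).SameCycle j k := by
  match n with
  | 0 => exact j.elim0
  | 1 => rw [Subsingleton.elim j k]
  | n + 2 =>
    have h_moved (x : Fin (n + 2)) : finRotate (n + 2) x ≠ x :=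
      Equiv.Perm.mem_support.mp (support_finRotate ▸ Finset.mem_univ x)
    exact isCycle_finRotate.sameCycle (h_moved j) (h_moved k)

end Rotation

section BipyramidSize

open Finset

/-- The strands of a crossing with level function `l` that pass at level at most `i`. -/
def lowStrands {ι : Type*} [Fintype ι] (l : ι → ℕ) (i : ℕ) : Finset ι :=
  {j | l j ≤ i}

@[simp]
theorem mem_lowStrands {ι : Type*} [Fintype ι] {l : ι → ℕ} {i : ℕ} {j : ι} :
    j ∈ lowStrands l i ↔ l j ≤ i :=
  mem_filter_univ j

theorem card_lowStrands {ι : Type*} [Fintype ι] {l : ι → ℕ} {n i : ℕ}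
    (hl : Set.BijOn l Set.univ (Set.Icc 1 n)) (hi : i ≤ n) : #(lowStrands l i) = i := by
  have h_image : (lowStrands l i).image l = Icc 1 i := by
    ext m
    simp only [mem_image, mem_lowStrands, mem_Icc]
    constructor
    · rintro ⟨j, hj, rfl⟩
      exact ⟨(hl.mapsTo (Set.mem_univ j)).1, hj⟩
    · rintro ⟨hm, hmi⟩
      obtain ⟨j, -, rfl⟩ := hl.surjOn ⟨hm, hmi.trans hi⟩
      exact ⟨j, hmi, rfl⟩
  have h_inj : Function.Injective l := Set.injOn_univ.mp hl.injOn
  rw [← card_image_of_injective _ h_inj, h_image, Nat.card_Icc, Nat.add_sub_cancel]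

theorem bipSize_eq_four_mul_card_exits {n : ℕ} (l : Fin n → ℕ) (i : ℕ) :
    bipSize n l i = 4 * #(exits (finRotate n) (lowStrands l i)) := by
  let S := lowStrands l i
  have h_union : ({j | min (l j) (l (cyc j)) ≤ i ∧ i + 1 ≤ max (l j) (l (cyc j))} : Finset (Fin n))
      = exits (finRotate n) S ∪ exits (finRotate n) Sᶜ := by
    ext j
    simp only [S, cyc_eq_finRotate, mem_filter_univ, mem_union, mem_exits, mem_compl,
      mem_lowStrands]
    omega
  have h_disj : Disjoint (exits (finRotate n) S) (exits (finRotate n) Sᶜ) :=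
    disjoint_compl_right.mono (exits_subset _ _) (exits_subset _ _)
  rw [bipSize, h_union, card_union_of_disjoint h_disj, card_exits_compl]
  ring

theorem four_dvd_bipSize {n : ℕ} (l : Fin n → ℕ) (i : ℕ) : 4 ∣ bipSize n l i :=
  ⟨_, bipSize_eq_four_mul_card_exits l i⟩

theorem four_le_bipSize {n : ℕ} {l : Fin n → ℕ} {i : ℕ} {j k : Fin n} (hj : l j ≤ i)
    (hk : i < l k) : 4 ≤ bipSize n l i := by
  have h_exit : (exits (finRotate n) (lowStrands l i)).Nonempty :=
    exits_nonempty_of_sameCycle (sameCycle_finRotate j k) (mem_lowStrands.mpr hj)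
      (mem_lowStrands.not.mpr hk.not_ge)
  have := h_exit.card_pos
  rw [bipSize_eq_four_mul_card_exits]
  omega

theorem bipSize_le_four_mul_card_lowStrands {n : ℕ} (l : Fin n → ℕ) (i : ℕ) :
    bipSize n l i ≤ 4 * #(lowStrands l i) := by
  rw [bipSize_eq_four_mul_card_exits]
  gcongr
  exact exits_subset _ _

theorem bipSize_le_four_mul_card_compl_lowStrands {n : ℕ} (l : Fin n → ℕ) (i : ℕ) :
    bipSize n l i ≤ 4 * #(lowStrands l i)ᶜ := by
  rw [bipSize_eq_four_mul_card_exits, ← card_exits_compl]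
  gcongr
  exact exits_subset _ _

theorem bipSize_mem_Icc {n : ℕ} {l : Fin n → ℕ} (hl : Set.BijOn l Set.univ (Set.Icc 1 n)) {i : ℕ}
    (hi : i ∈ Set.Ico 1 n) : bipSize n l i ∈ Set.Icc 4 (4 * min i (n - i)) := by
  obtain ⟨hi₁, hin⟩ := hi
  obtain ⟨j, -, hj⟩ := hl.surjOn ⟨le_rfl, hi₁.trans hin.le⟩
  obtain ⟨k, -, hk⟩ := hl.surjOn ⟨hi₁.trans hin.le, le_rfl⟩
  have h_low := bipSize_le_four_mul_card_lowStrands l i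
  have h_high := bipSize_le_four_mul_card_compl_lowStrands l i
  rw [card_compl, Fintype.card_fin, card_lowStrands hl hin.le] at h_high
  rw [card_lowStrands hl hin.le] at h_low
  exact ⟨four_le_bipSize (hj.trans_le hi₁) (hin.trans_eq hk.symm), by omega⟩

end BipyramidSize

/-- the size signature of every 4-crossing is `(4,4,4)` or `(4,8,4)`, and
both occur: the cyclic level sequence `1,2,3,4` has signature `(4,4,4)` and the cyclic
level sequence `1,3,2,4` has signature `(4,8,4)`. -/
theorem quadruple_crossing_signature :
    (∀ l : Fin 4 → ℕ, Set.BijOn l Set.univ (Set.Icc 1 4) →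
      ((bipSize 4 l 1 = 4 ∧ bipSize 4 l 2 = 4 ∧ bipSize 4 l 3 = 4) ∨
       (bipSize 4 l 1 = 4 ∧ bipSize 4 l 2 = 8 ∧ bipSize 4 l 3 = 4))) ∧
    (bipSize 4 ![1, 2, 3, 4] 1 = 4 ∧ bipSize 4 ![1, 2, 3, 4] 2 = 4 ∧
      bipSize 4 ![1, 2, 3, 4] 3 = 4) ∧
    (bipSize 4 ![1, 3, 2, 4] 1 = 4 ∧ bipSize 4 ![1, 3, 2, 4] 2 = 8 ∧
      bipSize 4 ![1, 3, 2, 4] 3 = 4) := by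
  refine ⟨fun l hl ↦ ?_, by decide, by decide⟩
  obtain ⟨h₁, h₁'⟩ := bipSize_mem_Icc hl (i := 1) (by simp)
  obtain ⟨h₂, h₂'⟩ := bipSize_mem_Icc hl (i := 2) (by simp)
  obtain ⟨h₃, h₃'⟩ := bipSize_mem_Icc hl (i := 3) (by simp)
  have h_dvd : 4 ∣ bipSize 4 l 2 := four_dvd_bipSize l 2
  omega
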